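/- arXiv:2507.19221 — 4 statements merged into one kernel-verified Lean document; each statement's English description precedes it below -/
import Mathlib

section
/- Let d ≥ 1, let ρ₀ ∈ P₂(ℝ^d) be absolutely continuous with respect to Lebesgue measure, let μ, ν ∈ P₂(ℝ^d), and let X_μ ∈ L²(ρ₀) satisfy (X_μ)_#ρ₀ = μ. Let μ* be a backward projection of μ onto the convex order cone below ν, and suppose T : ℝ^d → ℝ^d is an optimal transport map from μ to μ*, i.e., T_#μ = μ* and ∫‖x − T(x)‖² dμ(x) = W₂²(μ,μ*). Then X* := T ∘ X_μ satisfies: (i) X*_#ρ₀ = μ*; (ii) ‖X_μ − X*‖_{L²(ρ₀)} = W₂(μ,μ*); (iii) X* minimizes ‖X − X_μ‖_{L²(ρ₀)} over all X ∈ L²(ρ₀) with X_#ρ₀ ⪯ ν; and (iv) any other minimizer of this problem coincides with X* ρ₀-almost everywhere. -/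
/-!
The set `{X ∈ L²(ρ₀) | X_# ρ₀ ⪯ ν}` is convex, so the best approximation of `Xμ` in it is unique by
the parallelogram identity. That `T ∘ Xμ` is such an approximation follows from the minimality of
`μs`: for every admissible `X` the law of `(X, Xμ)` is a coupling of `X_# ρ₀` and `μ`, whence
`‖T ∘ Xμ - Xμ‖² = W₂²(μs, μ) ≤ W₂²(X_# ρ₀, μ) ≤ ‖X - Xμ‖²`.

Closure under midpoints (`convexOrder_midpoint`) is immediate from convexity for test functions `φ`
that are integrable for the laws of the two endpoints. A general convex `φ` need not be, so it is
written as the increasing limit of finite maxima of affine functions (`exists_approx`). These have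
linear growth, hence are integrable for every measure with finite second moment, and monotone
convergence gives the inequality for `φ`.
-/

open MeasureTheory

noncomputable section

variable {V : Type*} [NormedAddCommGroup V] [NormedSpace ℝ V]
  [MeasurableSpace V] [BorelSpace V]

/-- `π` is a coupling of `μ` and `ν`. -/
def IsCoupling (π : Measure (V × V)) (μ ν : Measure V) : Prop :=
  IsProbabilityMeasure π ∧ π.map Prod.fst = μ ∧ π.map Prod.snd = ν

/-- Squared 2-Wasserstein distance, as infimum of quadratic cost over couplings. -/
def W2sq (μ ν : Measure V) : ℝ :=
  sInf {c : ℝ | ∃ π : Measure (V × V), IsCoupling π μ ν ∧ c = ∫ p, ‖p.1 - p.2‖ ^ 2 ∂π}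

/-- The 2-Wasserstein distance. -/
def W2 (μ ν : Measure V) : ℝ := Real.sqrt (W2sq μ ν)

/-- `μ` is a Borel probability measure with finite second moment. -/
def IsP2 (μ : Measure V) : Prop :=
  IsProbabilityMeasure μ ∧ Integrable (fun x => ‖x‖ ^ 2) μ

/-- Convex order: `∫ φ dμ ≤ ∫ φ dν` for every convex `φ` for which both integrals exist. -/
def ConvexOrder (μ ν : Measure V) : Prop :=
  ∀ φ : V → ℝ, ConvexOn ℝ Set.univ φ → Integrable φ μ → Integrable φ ν →
    ∫ x, φ x ∂μ ≤ ∫ x, φ x ∂ν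

/-- `X` is a Borel map, square-integrable w.r.t. `ρ₀`. -/
def MemL2 (ρ₀ : Measure V) (X : V → V) : Prop :=
  Measurable X ∧ Integrable (fun x => ‖X x‖ ^ 2) ρ₀

/-- `μs` is a backward projection of `μ` onto the convex order cone below `ν`. -/
def IsBackwardProj (ν μ μs : Measure V) : Prop :=
  IsP2 μs ∧ ConvexOrder μs ν ∧
    ∀ ρ : Measure V, IsP2 ρ → ConvexOrder ρ ν → W2 μs μ ≤ W2 ρ μ

/-- `ρs` is a forward projection of `ν` above `μ`. -/
def IsForwardProj (μ ν ρs : Measure V) : Prop :=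
  IsP2 ρs ∧ ConvexOrder μ ρs ∧
    ∀ ρ : Measure V, IsP2 ρ → ConvexOrder μ ρ → W2 ρs ν ≤ W2 ρ ν

/-- `ρs` is a metric extrapolation of `(ν₀, ν₁)` at time `t`. -/
def IsMetricExtrap (t : ℝ) (ν₀ ν₁ ρs : Measure V) : Prop :=
  IsP2 ρs ∧ ∀ ρ : Measure V, IsP2 ρ →
    W2sq ρs ν₁ / (2 * (t - 1)) - W2sq ρs ν₀ / (2 * t) ≤
      W2sq ρ ν₁ / (2 * (t - 1)) - W2sq ρ ν₀ / (2 * t)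

/-- Constant-speed minimizing geodesic on `[a,b]` for `W₂`. -/
def IsGeodesic (a b : ℝ) (γ : ℝ → Measure V) : Prop :=
  (∀ s ∈ Set.Icc a b, IsP2 (γ s)) ∧
    ∀ s₁ ∈ Set.Icc a b, ∀ s₂ ∈ Set.Icc a b,
      W2 (γ s₁) (γ s₂) = |s₁ - s₂| / (b - a) * W2 (γ a) (γ b)

/-- Topological support of a measure. -/
def msupport (μ : Measure V) : Set V := {x | ∀ U ∈ nhds x, μ U ≠ 0}

/-- Regular measures: absolutely continuous, compact convex support,
density bounded above and below on the support. -/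
def IsP2reg {d : ℕ} (μ : Measure (EuclideanSpace ℝ (Fin d))) : Prop :=
  IsP2 μ ∧ μ ≪ volume ∧ IsCompact (msupport μ) ∧ Convex ℝ (msupport μ) ∧
    ∃ m M : ℝ, 0 < m ∧ 0 < M ∧
      ∀ᵐ x ∂(volume : Measure (EuclideanSpace ℝ (Fin d))),
        x ∈ msupport μ → m ≤ (μ.rnDeriv volume x).toReal ∧ (μ.rnDeriv volume x).toReal ≤ M

set_option linter.unusedSectionVars false

open Filter Topology in
/-- A finite convex function on `ℝ^d` is the increasing pointwise limit of convex functions that are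
integrable for every measure with finite second moment. -/
lemma exists_approx {d : ℕ} {φ : EuclideanSpace ℝ (Fin d) → ℝ} (hφ : ConvexOn ℝ Set.univ φ) :
    ∃ g : ℕ → EuclideanSpace ℝ (Fin d) → ℝ,
      (∀ n, ConvexOn ℝ Set.univ (g n)) ∧
      (∀ n (ρ : Measure (EuclideanSpace ℝ (Fin d))), IsP2 ρ → Integrable (g n) ρ) ∧
      (∀ x, Monotone fun n => g n x) ∧
      (∀ x, Tendsto (fun n => g n x) atTop (𝓝 (φ x))) := by
  have hcont : Continuous φ := continuousOn_univ.1 (hφ.continuousOn isOpen_univ)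
  obtain ⟨l, c, hle, hsup⟩ := hφ.real_univ_sSup_of_nat_affine_eq hcont.lowerSemicontinuous
  let a : ℕ → EuclideanSpace ℝ (Fin d) → ℝ := fun i x => l i x + c i
  have ha : ∀ i x, a i x ≤ φ x := fun i x => hle i x
  have hasup : ∀ x, ⨆ i, a i x = φ x := fun x => by
    have := congrFun hsup x
    rw [iSup_apply] at this
    exact this
  have hac : ∀ i, ConvexOn ℝ Set.univ (a i) := fun i =>
    ((l i).toLinearMap.convexOn convex_univ).add_const (c i)
  have hai : ∀ i (ρ : Measure (EuclideanSpace ℝ (Fin d))), IsP2 ρ → Integrable (a i) ρ := by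
    intro i ρ hρ
    have := hρ.1
    have h2 : MemLp (fun x : EuclideanSpace ℝ (Fin d) => x) 2 ρ :=
      (memLp_two_iff_integrable_sq_norm measurable_id.aestronglyMeasurable).2 hρ.2
    have h1 : Integrable (fun x : EuclideanSpace ℝ (Fin d) => x) ρ :=
      h2.integrable (by norm_num)
    exact ((l i).integrable_comp h1).add (integrable_const _)
  refine ⟨fun n => partialSups a n, fun n => ?_, fun n ρ hρ => ?_, fun x => ?_, fun x => ?_⟩
  · induction n with
    | zero => simpa using hac 0
    | succ n ih =>
      have e : partialSups a (n + 1) = partialSups a n ⊔ a (n + 1) := partialSups_succ a n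
      simp only [e]
      exact ih.sup (hac _)
  · induction n with
    | zero => simpa using hai 0 ρ hρ
    | succ n ih =>
      have e : partialSups a (n + 1) = partialSups a n ⊔ a (n + 1) := partialSups_succ a n
      simp only [e]
      exact ih.sup (hai _ ρ hρ)
  · exact fun m n hmn => partialSups_monotone a hmn x
  · have hbdd : BddAbove (Set.range fun i => a i x) := ⟨φ x, by rintro _ ⟨i, rfl⟩; exact ha i x⟩
    have hmono : Monotone fun n => partialSups a n x := fun m n hmn => partialSups_monotone a hmn x
    have hbdd' : BddAbove (Set.range fun n => partialSups a n x) := by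
      refine ⟨φ x, ?_⟩
      rintro _ ⟨n, rfl⟩
      exact partialSups_le a n φ (fun j _ => ha j) x
    convert tendsto_atTop_ciSup hmono hbdd' using 2
    rw [← hasup x]
    refine le_antisymm (ciSup_mono hbdd' fun i => le_partialSups a i x) ?_
    rw [hasup x]
    exact ciSup_le fun n => partialSups_le a n φ (fun j _ => ha j) x

lemma W2sq_comm (μ ν : Measure V) [SecondCountableTopology V] : W2sq μ ν = W2sq ν μ := by
  have key : ∀ μ ν : Measure V,
      {c : ℝ | ∃ π : Measure (V × V), IsCoupling π μ ν ∧ c = ∫ p, ‖p.1 - p.2‖ ^ 2 ∂π} ⊆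
      {c : ℝ | ∃ π : Measure (V × V), IsCoupling π ν μ ∧ c = ∫ p, ‖p.1 - p.2‖ ^ 2 ∂π} := by
    rintro μ ν c ⟨π, ⟨h, h1, h2⟩, rfl⟩
    refine ⟨π.map Prod.swap, ⟨Measure.isProbabilityMeasure_map measurable_swap.aemeasurable,
      ?_, ?_⟩, ?_⟩
    · rw [Measure.map_map measurable_fst measurable_swap]; exact h2
    · rw [Measure.map_map measurable_snd measurable_swap]; exact h1
    · rw [integral_map measurable_swap.aemeasurable
        (by fun_prop : Measurable fun p : V × V => ‖p.1 - p.2‖ ^ 2).aestronglyMeasurable]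
      simp only [Prod.fst_swap, Prod.snd_swap, norm_sub_rev]
  exact congrArg sInf (Set.Subset.antisymm (key μ ν) (key ν μ))

lemma W2sq_nonneg (μ ν : Measure V) : 0 ≤ W2sq μ ν := by
  refine Real.sInf_nonneg ?_
  rintro _ ⟨π, -, rfl⟩
  exact integral_nonneg fun p => by positivity

/-- The law of `(X, Y)` is a coupling, so its cost bounds `W₂²` from above. -/
lemma W2sq_map_le [SecondCountableTopology V] {ρ₀ : Measure V} [IsProbabilityMeasure ρ₀]
    {X Y : V → V} (hX : Measurable X) (hY : Measurable Y) :
    W2sq (ρ₀.map X) (ρ₀.map Y) ≤ ∫ x, ‖X x - Y x‖ ^ 2 ∂ρ₀ := by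
  refine csInf_le ⟨0, ?_⟩ ⟨ρ₀.map fun x => (X x, Y x), ⟨?_, ?_, ?_⟩, ?_⟩
  · rintro _ ⟨π, -, rfl⟩
    exact integral_nonneg fun p => by positivity
  · exact Measure.isProbabilityMeasure_map (hX.prodMk hY).aemeasurable
  · rw [Measure.map_map measurable_fst (hX.prodMk hY)]; rfl
  · rw [Measure.map_map measurable_snd (hX.prodMk hY)]; rfl
  · rw [integral_map (hX.prodMk hY).aemeasurable
      (by fun_prop : Measurable fun p : V × V => ‖p.1 - p.2‖ ^ 2).aestronglyMeasurable]

lemma MemL2.memLp [SecondCountableTopology V] {ρ₀ : Measure V} {X : V → V} (hX : MemL2 ρ₀ X) :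
    MemLp X 2 ρ₀ :=
  (memLp_two_iff_integrable_sq_norm hX.1.aestronglyMeasurable).2 hX.2

lemma MemL2.isP2_map {ρ₀ : Measure V} (hρ₀ : IsP2 ρ₀) {X : V → V} (hX : MemL2 ρ₀ X) :
    IsP2 (ρ₀.map X) := by
  have := hρ₀.1
  refine ⟨Measure.isProbabilityMeasure_map hX.1.aemeasurable, ?_⟩
  exact (integrable_map_measure (by fun_prop : Measurable fun x : V => ‖x‖ ^ 2).aestronglyMeasurable
    hX.1.aemeasurable).2 hX.2

lemma MemL2.midpoint [SecondCountableTopology V] {ρ₀ : Measure V} {X Y : V → V}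
    (hX : MemL2 ρ₀ X) (hY : MemL2 ρ₀ Y) :
    MemL2 ρ₀ fun x => (1 / 2 : ℝ) • X x + (1 / 2 : ℝ) • Y x := by
  have hm : Measurable fun x => (1 / 2 : ℝ) • X x + (1 / 2 : ℝ) • Y x :=
    (hX.1.const_smul _).add (hY.1.const_smul _)
  exact ⟨hm, (memLp_two_iff_integrable_sq_norm hm.aestronglyMeasurable).1
    ((hX.memLp.const_smul (1 / 2 : ℝ)).add (hY.memLp.const_smul (1 / 2 : ℝ)))⟩

open Filter Topology in
/-- The maps in `L²(ρ₀)` with law below `ν` in the convex order are closed under midpoints. -/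
lemma convexOrder_midpoint {d : ℕ} {ρ₀ ν : Measure (EuclideanSpace ℝ (Fin d))}
    (hρ₀ : IsP2 ρ₀) (hν : IsP2 ν) {X Y : EuclideanSpace ℝ (Fin d) → EuclideanSpace ℝ (Fin d)}
    (hX : MemL2 ρ₀ X) (hY : MemL2 ρ₀ Y)
    (hXν : ConvexOrder (ρ₀.map X) ν) (hYν : ConvexOrder (ρ₀.map Y) ν) :
    ConvexOrder (ρ₀.map fun x => (1 / 2 : ℝ) • X x + (1 / 2 : ℝ) • Y x) ν := by
  intro φ hφ hφM hφν
  have hM := hX.midpoint hY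
  obtain ⟨g, hgc, hgi, hgm, hgt⟩ := exists_approx hφ
  have hlim := integral_tendsto_of_tendsto_of_monotone (fun n => hgi n _ (hM.isP2_map hρ₀)) hφM
    (ae_of_all _ hgm) (ae_of_all _ hgt)
  refine le_of_tendsto' hlim fun n => ?_
  have iX := hgi n _ (hX.isP2_map hρ₀)
  have iY := hgi n _ (hY.isP2_map hρ₀)
  have iM := hgi n _ (hM.isP2_map hρ₀)
  have hX' := hXν (g n) (hgc n) iX (hgi n ν hν)
  have hY' := hYν (g n) (hgc n) iY (hgi n ν hν)
  have hν' : ∫ x, g n x ∂ν ≤ ∫ x, φ x ∂ν :=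
    integral_mono (hgi n ν hν) hφν fun x => (hgm x).ge_of_tendsto (hgt x) n
  rw [integral_map hX.1.aemeasurable iX.1] at hX'
  rw [integral_map hY.1.aemeasurable iY.1] at hY'
  rw [integral_map hM.1.aemeasurable iM.1]
  have jX : Integrable (fun x => g n (X x)) ρ₀ := iX.comp_measurable hX.1
  have jY : Integrable (fun x => g n (Y x)) ρ₀ := iY.comp_measurable hY.1
  have jM := iM.comp_measurable hM.1
  have hmid : ∫ x, g n ((1 / 2 : ℝ) • X x + (1 / 2 : ℝ) • Y x) ∂ρ₀ ≤
      ∫ x, ((1 / 2 : ℝ) * g n (X x) + (1 / 2 : ℝ) * g n (Y x)) ∂ρ₀ := by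
    refine integral_mono jM ((jX.const_mul _).add (jY.const_mul _)) fun x => ?_
    exact (hgc n).2 (Set.mem_univ (X x)) (Set.mem_univ (Y x)) (by norm_num) (by norm_num)
      (by norm_num)
  rw [integral_add (jX.const_mul _) (jY.const_mul _), integral_const_mul, integral_const_mul]
    at hmid
  linarith

/-- lifting the backward projection to `L²(ρ₀)`. -/
theorem stmt3 {d : ℕ} (hd : 1 ≤ d)
    (ρ₀ μ ν μs : Measure (EuclideanSpace ℝ (Fin d)))
    (hρ₀ : IsP2 ρ₀) (hac : ρ₀ ≪ (volume : Measure (EuclideanSpace ℝ (Fin d))))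
    (hμ : IsP2 μ) (hν : IsP2 ν)
    (Xμ : EuclideanSpace ℝ (Fin d) → EuclideanSpace ℝ (Fin d)) (hXμ : MemL2 ρ₀ Xμ) (hXμpush : ρ₀.map Xμ = μ)
    (hμs : IsBackwardProj ν μ μs)
    (T : EuclideanSpace ℝ (Fin d) → EuclideanSpace ℝ (Fin d)) (hT : Measurable T) (hTpush : μ.map T = μs)
    (hTopt : ∫ x, ‖x - T x‖ ^ 2 ∂μ = W2 μ μs ^ 2) :
    -- (i) X* := T ∘ Xμ pushes ρ₀ forward to μ*
    ρ₀.map (T ∘ Xμ) = μs ∧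
    -- (ii) ‖Xμ − X*‖_{L²(ρ₀)} = W₂(μ, μ*)
    Real.sqrt (∫ x, ‖Xμ x - T (Xμ x)‖ ^ 2 ∂ρ₀) = W2 μ μs ∧
    -- (iii) X* is an admissible minimizer
    (MemL2 ρ₀ (T ∘ Xμ) ∧ ConvexOrder (ρ₀.map (T ∘ Xμ)) ν ∧
      ∀ X : EuclideanSpace ℝ (Fin d) → EuclideanSpace ℝ (Fin d), MemL2 ρ₀ X → ConvexOrder (ρ₀.map X) ν →
        ∫ x, ‖T (Xμ x) - Xμ x‖ ^ 2 ∂ρ₀ ≤ ∫ x, ‖X x - Xμ x‖ ^ 2 ∂ρ₀) ∧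
    -- (iv) uniqueness: any minimizer coincides with X* ρ₀-a.e.
    (∀ X : EuclideanSpace ℝ (Fin d) → EuclideanSpace ℝ (Fin d), MemL2 ρ₀ X → ConvexOrder (ρ₀.map X) ν →
      (∀ X' : EuclideanSpace ℝ (Fin d) → EuclideanSpace ℝ (Fin d), MemL2 ρ₀ X' → ConvexOrder (ρ₀.map X') ν →
        ∫ x, ‖X x - Xμ x‖ ^ 2 ∂ρ₀ ≤ ∫ x, ‖X' x - Xμ x‖ ^ 2 ∂ρ₀) →
      X =ᵐ[ρ₀] T ∘ Xμ) := by
  have := hρ₀.1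
  have hTm : Measurable (T ∘ Xμ) := hT.comp hXμ.1
  have hpush : ρ₀.map (T ∘ Xμ) = μs := by rw [← Measure.map_map hT hXμ.1, hXμpush, hTpush]
  have hcost : ∫ x, ‖Xμ x - T (Xμ x)‖ ^ 2 ∂ρ₀ = W2 μ μs ^ 2 := by
    rw [← hTopt, ← hXμpush, integral_map hXμ.1.aemeasurable
      (by fun_prop : Measurable fun x => ‖x - T x‖ ^ 2).aestronglyMeasurable]
  have hTL : MemL2 ρ₀ (T ∘ Xμ) := by
    refine ⟨hTm, ?_⟩
    have h := hμs.1.2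
    rw [← hpush] at h
    exact h.comp_measurable hTm
  have hTν : ConvexOrder (ρ₀.map (T ∘ Xμ)) ν := hpush ▸ hμs.2.1
  have hmin : ∀ X : EuclideanSpace ℝ (Fin d) → EuclideanSpace ℝ (Fin d), MemL2 ρ₀ X →
      ConvexOrder (ρ₀.map X) ν →
      ∫ x, ‖T (Xμ x) - Xμ x‖ ^ 2 ∂ρ₀ ≤ ∫ x, ‖X x - Xμ x‖ ^ 2 ∂ρ₀ := by
    intro X hX hXν
    have h1 := hμs.2.2 _ (hX.isP2_map hρ₀) hXν
    have h2 : W2sq μs μ ≤ W2sq (ρ₀.map X) μ := (Real.sqrt_le_sqrt_iff (W2sq_nonneg _ _)).1 h1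
    have h3 := W2sq_map_le (ρ₀ := ρ₀) hX.1 hXμ.1
    rw [hXμpush] at h3
    simp only [norm_sub_rev (T _)]
    rw [hcost, W2, Real.sq_sqrt (W2sq_nonneg _ _), W2sq_comm]
    exact h2.trans h3
  refine ⟨hpush, ?_, ⟨hTL, hTν, hmin⟩, ?_⟩
  · rw [hcost]
    exact Real.sqrt_sq (Real.sqrt_nonneg _)
  intro X hX hXν hXmin
  have hM := hX.midpoint hTL
  have hTX := hXmin _ hTL hTν
  have hMX := hXmin _ hM (convexOrder_midpoint hρ₀ hν hX hTL hXν hTν)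
  have hsq : ∀ {Y Z : EuclideanSpace ℝ (Fin d) → EuclideanSpace ℝ (Fin d)}, MemL2 ρ₀ Y →
      MemL2 ρ₀ Z → Integrable (fun x => ‖Y x - Z x‖ ^ 2) ρ₀ := fun hY hZ =>
    (memLp_two_iff_integrable_sq_norm (hY.1.sub hZ.1).aestronglyMeasurable).1
      (hY.memLp.sub hZ.memLp)
  have iX := hsq hX hXμ
  have iT := hsq hTL hXμ
  have iD := hsq hX hTL
  have hpar : ∀ x, ‖((1 / 2 : ℝ) • X x + (1 / 2 : ℝ) • (T ∘ Xμ) x) - Xμ x‖ ^ 2 =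
      (1 / 2 : ℝ) * ‖X x - Xμ x‖ ^ 2 + (1 / 2 : ℝ) * ‖(T ∘ Xμ) x - Xμ x‖ ^ 2
        - (1 / 4 : ℝ) * ‖X x - (T ∘ Xμ) x‖ ^ 2 := by
    intro x
    have e1 : ((1 / 2 : ℝ) • X x + (1 / 2 : ℝ) • (T ∘ Xμ) x) - Xμ x =
        (1 / 2 : ℝ) • ((X x - Xμ x) + ((T ∘ Xμ) x - Xμ x)) := by module
    have e2 : X x - (T ∘ Xμ) x = (X x - Xμ x) - ((T ∘ Xμ) x - Xμ x) := by abel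
    rw [e1, e2]
    generalize X x - Xμ x = u
    generalize (T ∘ Xμ) x - Xμ x = v
    rw [norm_smul, mul_pow, norm_add_sq_real, norm_sub_sq_real, Real.norm_eq_abs]
    norm_num
    ring
  simp only [hpar] at hMX
  have iS : Integrable (fun x => (1 / 2 : ℝ) * ‖X x - Xμ x‖ ^ 2 +
      (1 / 2 : ℝ) * ‖(T ∘ Xμ) x - Xμ x‖ ^ 2) ρ₀ := (iX.const_mul _).add (iT.const_mul _)
  rw [integral_sub iS (iD.const_mul _), integral_add (iX.const_mul _) (iT.const_mul _),
    integral_const_mul, integral_const_mul, integral_const_mul] at hMX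
  have hTX' := hmin X hX hXν
  have hle : ∫ x, ‖X x - (T ∘ Xμ) x‖ ^ 2 ∂ρ₀ ≤ 0 := by
    simp only [Function.comp_apply] at hMX hTX ⊢
    linarith
  have h0 := (integral_eq_zero_iff_of_nonneg (fun x => by positivity) iD).1
    (le_antisymm hle (integral_nonneg fun x => by positivity))
  filter_upwards [h0] with x hx
  exact sub_eq_zero.1 (norm_eq_zero.1 (pow_eq_zero_iff two_ne_zero |>.1 hx))

end
end

section
/- Let d ≥ 1 and let μ, μ̃, ν ∈ P₂(ℝ^d). If μ* is a backward projection of μ onto the convex order cone below ν, and μ̃* is a backward projection of μ̃ onto the convex order cone below ν, then W₂(μ*, μ̃*) ≤ W₂(μ, μ̃). That is, the backward projection in convex order onto a fixed ν is non-expansive in the Wasserstein distance. -/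
/-!
The proof lifts the problem to the Hilbert space of square-integrable random vectors. There the set
of `Y` whose law is below `ν` in convex order is convex (`convexOrder_map_segment`), and the
backward projection of `μ` is the law of the metric projection of a random vector `X` of law `μ`
onto this set. Metric projections onto convex sets are non-expansive.

Almost optimal couplings replace optimal ones. To an almost optimal coupling `(X, X')` of `μ` and
`μ'` one glues, by disintegration (`exists_extension`), almost optimal couplings of the two
projections with `μ` and `μ'`; this gives `Y` and `Y'` on the same probability space. Comparing `Y`
with the competitor `(1 - t) Y + t Y'`, and `Y'` with `(1 - t) Y' + t Y`, gives an approximate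
variational inequality for each (`variational`). Their sum and a four-point inequality bound
`E‖Y - Y'‖ ^ 2` by `E‖X - X'‖ ^ 2` up to an error which vanishes as `t → 0` when the couplings are
optimal up to `t ^ 2`.
-/


open MeasureTheory

noncomputable section

variable {V : Type*} [NormedAddCommGroup V] [NormedSpace ℝ V]
  [MeasurableSpace V] [BorelSpace V]

open ProbabilityTheory Filter Topology

set_option linter.unusedSectionVars false

section General

variable {E : Type*} [NormedAddCommGroup E] [NormedSpace ℝ E] [MeasurableSpace E] [BorelSpace E]

lemma IsP2.memLp_id [SecondCountableTopology E] {m : Measure E} (hm : IsP2 m) :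
    MemLp (fun x : E => x) 2 m :=
  (memLp_two_iff_integrable_sq_norm measurable_id.aestronglyMeasurable).2 hm.2

/-! ### Approximation of convex functions -/

/-- A convex function is the increasing limit of maxima of finitely many affine functions, and those
are integrable against every measure with finite second moment. -/
lemma exists_integrable_approx [FiniteDimensional ℝ E] {φ : E → ℝ}
    (hφ : ConvexOn ℝ Set.univ φ) :
    ∃ g : ℕ → E → ℝ, (∀ n, ConvexOn ℝ Set.univ (g n)) ∧
      (∀ n (m : Measure E), IsP2 m → Integrable (g n) m) ∧ Monotone g ∧
      ∀ x, Tendsto (fun n => g n x) atTop (𝓝 (φ x)) := by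
  have : SecondCountableTopology E :=
    have := FiniteDimensional.proper ℝ E
    inferInstance
  have hc : Continuous φ := continuousOn_univ.1 (hφ.continuousOn isOpen_univ)
  obtain ⟨l, c, hle, hsup⟩ := hφ.real_univ_sSup_of_nat_affine_eq hc.lowerSemicontinuous
  set f : ℕ → E → ℝ := fun i => ⇑(l i) + Function.const E (c i) with hf
  have hbdd (x : E) : BddAbove (Set.range fun i => f i x) :=
    ⟨φ x, by rintro _ ⟨i, rfl⟩; exact hle i x⟩
  have hconv (i : ℕ) : ConvexOn ℝ Set.univ (f i) :=
    ((l i).toLinearMap.convexOn convex_univ).add (convexOn_const _ convex_univ)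
  have hint (i : ℕ) (m : Measure E) (hm : IsP2 m) : Integrable (f i) m := by
    have := hm.1
    exact ((l i).integrable_comp (hm.memLp_id.integrable one_le_two)).add (integrable_const _)
  refine ⟨fun n => partialSups f n, fun n => ?_, fun n m hm => ?_, (partialSups f).monotone,
    fun x => ?_⟩
  · induction n with
    | zero => simpa using hconv 0
    | succ n ih => simpa [partialSups_add_one] using ih.sup (hconv (n + 1))
  · induction n with
    | zero => simpa using hint 0 m hm
    | succ n ih => simpa [partialSups_add_one] using ih.sup (hint (n + 1) m hm)
  · simp only [Pi.partialSups_apply]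
    rw [show φ x = ⨆ i, f i x by rw [← hsup]; exact iSup_apply, ← ciSup_partialSups_eq (hbdd x)]
    exact tendsto_atTop_ciSup (partialSups _).monotone
      (bddAbove_range_partialSups.2 (hbdd x))

/-! ### Couplings and gluing -/

lemma W2sq_nonneg_s4 (m n : Measure E) : 0 ≤ W2sq m n := by
  apply Real.sInf_nonneg
  rintro _ ⟨π, -, rfl⟩
  positivity

lemma W2sq_map_le_s4 [SecondCountableTopology E] {Ω : Type*} [MeasurableSpace Ω] {P : Measure Ω}
    [IsProbabilityMeasure P]
    {A B : Ω → E} (hA : Measurable A) (hB : Measurable B) :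
    W2sq (P.map A) (P.map B) ≤ ∫ w, ‖A w - B w‖ ^ 2 ∂P := by
  refine csInf_le ⟨0, ?_⟩ ⟨P.map fun w => (A w, B w), ⟨?_, ?_, ?_⟩, ?_⟩
  · rintro _ ⟨π, -, rfl⟩
    positivity
  · exact Measure.isProbabilityMeasure_map (hA.prodMk hB).aemeasurable
  · rw [Measure.map_map measurable_fst (hA.prodMk hB)]; rfl
  · rw [Measure.map_map measurable_snd (hA.prodMk hB)]; rfl
  · rw [integral_map (hA.prodMk hB).aemeasurable]
    exact (by fun_prop : Measurable fun p : E × E => ‖p.1 - p.2‖ ^ 2).aestronglyMeasurable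

lemma exists_coupling_lt {m n : Measure E} (hm : IsP2 m) (hn : IsP2 n) {ε : ℝ} (hε : 0 < ε) :
    ∃ π : Measure (E × E), IsCoupling π m n ∧ ∫ p, ‖p.1 - p.2‖ ^ 2 ∂π < W2sq m n + ε := by
  have := hm.1
  have := hn.1
  have hne : {c : ℝ | ∃ π : Measure (E × E), IsCoupling π m n ∧
      c = ∫ p, ‖p.1 - p.2‖ ^ 2 ∂π}.Nonempty :=
    ⟨_, m.prod n, ⟨inferInstance, by simp [Measure.map_fst_prod], by simp [Measure.map_snd_prod]⟩,
      rfl⟩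
  obtain ⟨_, ⟨π, hπ, rfl⟩, hlt⟩ := exists_lt_of_csInf_lt hne (lt_add_of_pos_right (W2sq m n) hε)
  exact ⟨π, hπ, hlt⟩

/-- Gluing: a random variable `X` on `Ω` and a coupling `π` of some measure with the law of `X` can
be realized jointly on `Ω × E`, by drawing the second coordinate from the disintegration of `π`
along `X`. -/
lemma exists_extension [StandardBorelSpace E] {Ω : Type*} [MeasurableSpace Ω]
    {P : Measure Ω} [IsProbabilityMeasure P] {X : Ω → E} (hX : Measurable X)
    {π : Measure (E × E)} [IsProbabilityMeasure π] (hπ : π.map Prod.snd = P.map X) :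
    ∃ P' : Measure (Ω × E), IsProbabilityMeasure P' ∧ P'.map Prod.fst = P ∧
      P'.map (fun w => (w.2, X w.1)) = π := by
  have : Nonempty E := ⟨0⟩
  set ρ : Measure (E × E) := π.map Prod.swap with hρ
  have : IsProbabilityMeasure ρ := Measure.isProbabilityMeasure_map measurable_swap.aemeasurable
  have hfst : ρ.fst = P.map X := by
    rw [Measure.fst, hρ, Measure.map_map measurable_fst measurable_swap, ← hπ]; rfl
  have hglue : (P ⊗ₘ ρ.condKernel.comap X hX).map (fun w => (X w.1, w.2)) = ρ := by
    have : IsProbabilityMeasure ((P ⊗ₘ ρ.condKernel.comap X hX).map (fun w => (X w.1, w.2))) :=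
      Measure.isProbabilityMeasure_map (by fun_prop)
    refine Measure.ext_prod fun {s t} hs ht => ?_
    rw [Measure.map_apply (by fun_prop) (hs.prod ht)]
    have hpre : (fun w : Ω × E => (X w.1, w.2)) ⁻¹' s ×ˢ t = (X ⁻¹' s) ×ˢ t := by
      ext; simp
    rw [hpre, Measure.compProd_apply_prod (hX hs) ht]
    conv_rhs => rw [← ρ.disintegrate ρ.condKernel, Measure.compProd_apply_prod hs ht, hfst,
      setLIntegral_map hs (Kernel.measurable_coe _ ht) hX]
    rfl
  refine ⟨P ⊗ₘ ρ.condKernel.comap X hX, inferInstance, Measure.fst_compProd _ _, ?_⟩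
  have hswap : (fun w : Ω × E => (w.2, X w.1)) = Prod.swap ∘ fun w => (X w.1, w.2) := rfl
  rw [hswap, ← Measure.map_map measurable_swap (by fun_prop), hglue, hρ,
    Measure.map_map measurable_swap measurable_swap, Prod.swap_swap_eq, Measure.map_id]

/-! ### Random vectors with laws in convex order -/

section RandomVectors

variable [SecondCountableTopology E] {Ω : Type*} [MeasurableSpace Ω] {P : Measure Ω}

lemma IsP2.memLp {A : Ω → E} (hA : Measurable A) (h : IsP2 (P.map A)) : MemLp A 2 P :=
  h.memLp_id.comp_of_map hA.aemeasurable

lemma MeasureTheory.MemLp.isP2_map [IsProbabilityMeasure P] {A : Ω → E} (hA : Measurable A)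
    (h : MemLp A 2 P) : IsP2 (P.map A) := by
  refine ⟨Measure.isProbabilityMeasure_map hA.aemeasurable, ?_⟩
  rw [integrable_map_measure (by fun_prop) hA.aemeasurable]
  exact (memLp_two_iff_integrable_sq_norm hA.aestronglyMeasurable).1 h

lemma integrable_sq_sub {A B : Ω → E} (hA : MemLp A 2 P) (hB : MemLp B 2 P) :
    Integrable (fun w => ‖A w - B w‖ ^ 2) P :=
  (hA.sub hB).integrable_norm_pow two_ne_zero

/-- Convexity of the set of random vectors whose law is below `ν` in convex order. The definition of
the order only speaks of test functions integrable against both measures, whereas a function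
integrable against `ν` and the law of the mixture need not, a priori, be integrable against the laws
of `Y` and `Z`; hence the passage through `exists_integrable_approx`. -/
lemma convexOrder_map_segment [FiniteDimensional ℝ E] [IsProbabilityMeasure P] {ν : Measure E}
    (hν : IsP2 ν) {Y Z : Ω → E} (hY : Measurable Y) (hZ : Measurable Z)
    (hY2 : IsP2 (P.map Y)) (hZ2 : IsP2 (P.map Z))
    (hYν : ConvexOrder (P.map Y) ν) (hZν : ConvexOrder (P.map Z) ν)
    {t : ℝ} (ht0 : 0 ≤ t) (ht1 : t ≤ 1) :
    ConvexOrder (P.map fun w => (1 - t) • Y w + t • Z w) ν := by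
  have hT : Measurable fun w => (1 - t) • Y w + t • Z w := by fun_prop
  have hT2 : IsP2 (P.map fun w => (1 - t) • Y w + t • Z w) :=
    (((hY2.memLp hY).const_smul (1 - t)).add ((hZ2.memLp hZ).const_smul t)).isP2_map hT
  intro φ hφ hφT hφν
  obtain ⟨g, hgc, hgi, hgm, hgt⟩ := exists_integrable_approx hφ
  have lim {m : Measure E} (hm : IsP2 m) (hφm : Integrable φ m) :
      Tendsto (fun n => ∫ x, g n x ∂m) atTop (𝓝 (∫ x, φ x ∂m)) :=
    integral_tendsto_of_tendsto_of_monotone (fun n => hgi n m hm) hφm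
      (.of_forall fun x _ _ hij => hgm hij x) (.of_forall hgt)
  refine le_of_tendsto_of_tendsto' (lim hT2 hφT) (lim hν hφν) fun n => ?_
  have hcont : Continuous (g n) := continuousOn_univ.1 ((hgc n).continuousOn isOpen_univ)
  have comp {A : Ω → E} (hA : Measurable A) (hA2 : IsP2 (P.map A)) :
      Integrable (fun w => g n (A w)) P :=
    (hgi n _ hA2).comp_measurable hA
  have int {A : Ω → E} (hA : Measurable A) : ∫ x, g n x ∂(P.map A) = ∫ w, g n (A w) ∂P :=
    integral_map hA.aemeasurable hcont.aestronglyMeasurable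
  have hYn := hYν (g n) (hgc n) (hgi n _ hY2) (hgi n _ hν)
  have hZn := hZν (g n) (hgc n) (hgi n _ hZ2) (hgi n _ hν)
  rw [int hY] at hYn
  rw [int hZ] at hZn
  rw [int hT]
  calc ∫ w, g n ((1 - t) • Y w + t • Z w) ∂P
      ≤ ∫ w, ((1 - t) * g n (Y w) + t * g n (Z w)) ∂P := by
        refine integral_mono (comp hT hT2)
          (((comp hY hY2).const_mul _).add ((comp hZ hZ2).const_mul _)) fun w => ?_
        exact (hgc n).2 (Set.mem_univ _) (Set.mem_univ _) (by linarith) ht0 (by ring)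
    _ = (1 - t) * ∫ w, g n (Y w) ∂P + t * ∫ w, g n (Z w) ∂P := by
        rw [integral_add ((comp hY hY2).const_mul _) ((comp hZ hZ2).const_mul _),
          integral_const_mul, integral_const_mul]
    _ ≤ (1 - t) * ∫ x, g n x ∂ν + t * ∫ x, g n x ∂ν := by
        have : 0 ≤ 1 - t := by linarith
        gcongr
    _ = ∫ x, g n x ∂ν := by ring

end RandomVectors

end General

/-! ### Metric projection of random vectors -/

section Euclidean

variable {E : Type*} [NormedAddCommGroup E] [InnerProductSpace ℝ E] [FiniteDimensional ℝ E]
  [MeasurableSpace E] [BorelSpace E] {Ω : Type*} [MeasurableSpace Ω] {P : Measure Ω}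

lemma norm_segment_sub_sq (x y z : E) (t : ℝ) :
    ‖((1 - t) • y + t • z) - x‖ ^ 2 =
      (1 - t) * ‖y - x‖ ^ 2 + t * ‖z - x‖ ^ 2 - t * (1 - t) * ‖y - z‖ ^ 2 := by
  have h1 : ((1 - t) • y + t • z) - x = (1 - t) • (y - x) + t • (z - x) := by module
  have h2 : y - z = (y - x) - (z - x) := by abel
  rw [h1, h2, norm_add_sq_real, norm_sub_sq_real (y - x), norm_smul, norm_smul, mul_pow, mul_pow,
    real_inner_smul_left, real_inner_smul_right, Real.norm_eq_abs, Real.norm_eq_abs, sq_abs, sq_abs]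
  ring

/-- The difference of the two sides is `‖(x - x') - (y - y')‖ ^ 2`. -/
lemma four_point (x x' y y' : E) :
    ‖y' - x‖ ^ 2 + ‖y - x'‖ ^ 2 ≤
      ‖y - x‖ ^ 2 + ‖y' - x'‖ ^ 2 + ‖x - x'‖ ^ 2 + ‖y - y'‖ ^ 2 := by
  have h := sq_nonneg ‖(x - x') - (y - y')‖
  rw [norm_sub_sq_real] at h
  simp only [norm_sub_sq_real, inner_sub_left, inner_sub_right] at h ⊢
  linarith [real_inner_comm x' y, real_inner_comm x' y', real_inner_comm x y',
    real_inner_comm x y]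

/-- Approximate variational inequality for the projection: `Y` is tested against the competitor
`(1 - t) Y + t Z`, whose law is still below `ν`. -/
lemma variational [IsProbabilityMeasure P] {ν μ μs : Measure E} (hν : IsP2 ν)
    (hproj : IsBackwardProj ν μ μs) {X Y Z : Ω → E}
    (hX : Measurable X) (hY : Measurable Y) (hZ : Measurable Z) (hμ : IsP2 μ)
    (lX : P.map X = μ) (lY : P.map Y = μs) (hZ2 : IsP2 (P.map Z))
    (hZν : ConvexOrder (P.map Z) ν) {ε t : ℝ}
    (hopt : ∫ w, ‖Y w - X w‖ ^ 2 ∂P ≤ W2sq μs μ + ε) (ht0 : 0 ≤ t) (ht1 : t ≤ 1) :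
    t * ∫ w, ‖Y w - X w‖ ^ 2 ∂P + t * (1 - t) * ∫ w, ‖Y w - Z w‖ ^ 2 ∂P ≤
      t * ∫ w, ‖Z w - X w‖ ^ 2 ∂P + ε := by
  subst lX lY
  obtain ⟨hY2, hYν, hmin⟩ := hproj
  have := FiniteDimensional.proper ℝ E
  have LX := hμ.memLp hX
  have LY := hY2.memLp hY
  have LZ := hZ2.memLp hZ
  have hT : Measurable fun w => (1 - t) • Y w + t • Z w := by fun_prop
  have hT2 : IsP2 (P.map fun w => (1 - t) • Y w + t • Z w) :=
    ((LY.const_smul (1 - t)).add (LZ.const_smul t)).isP2_map hT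
  have h1 := hmin _ hT2 (convexOrder_map_segment hν hY hZ hY2 hZ2 hYν hZν ht0 ht1)
  rw [W2, W2, Real.sqrt_le_sqrt_iff (W2sq_nonneg_s4 _ _)] at h1
  have h2 := h1.trans (W2sq_map_le_s4 hT hX)
  simp only [norm_segment_sub_sq] at h2
  have iYX := integrable_sq_sub LY LX
  have iZX := integrable_sq_sub LZ LX
  have iYZ := integrable_sq_sub LY LZ
  rw [integral_sub ((iYX.const_mul _).fun_add (iZX.const_mul _)) (iYZ.const_mul _),
    integral_add (iYX.const_mul _) (iZX.const_mul _), integral_const_mul, integral_const_mul,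
    integral_const_mul] at h2
  linarith

/-- The non-expansiveness estimate, with the errors caused by couplings optimal only up to `ε`.
The quadratic error `2 * t ^ 2 * E‖Y - Y'‖ ^ 2` is bounded through the second moments of the
projections, so that it does not depend on the coupling. -/
lemma estimate [IsProbabilityMeasure P] {ν μ μ' μs μs' : Measure E} (hν : IsP2 ν)
    (hμ : IsP2 μ) (hμ' : IsP2 μ')
    (hproj : IsBackwardProj ν μ μs) (hproj' : IsBackwardProj ν μ' μs') {X X' Y Y' : Ω → E}
    (hX : Measurable X) (hX' : Measurable X') (hY : Measurable Y) (hY' : Measurable Y')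
    (lX : P.map X = μ) (lX' : P.map X' = μ') (lY : P.map Y = μs) (lY' : P.map Y' = μs') {ε t : ℝ}
    (hopt : ∫ w, ‖Y w - X w‖ ^ 2 ∂P ≤ W2sq μs μ + ε)
    (hopt' : ∫ w, ‖Y' w - X' w‖ ^ 2 ∂P ≤ W2sq μs' μ' + ε) (ht0 : 0 ≤ t) (ht1 : t ≤ 1) :
    t * ∫ w, ‖Y w - Y' w‖ ^ 2 ∂P ≤
      t * ∫ w, ‖X w - X' w‖ ^ 2 ∂P +
        4 * t ^ 2 * (∫ x, ‖x‖ ^ 2 ∂μs + ∫ x, ‖x‖ ^ 2 ∂μs') + 2 * ε := by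
  have := FiniteDimensional.proper ℝ E
  have v1 := variational hν hproj hX hY hY' hμ lX lY (lY' ▸ hproj'.1) (lY' ▸ hproj'.2.1)
    hopt ht0 ht1
  have v2 := variational hν hproj' hX' hY' hY hμ' lX' lY' (lY ▸ hproj.1) (lY ▸ hproj.2.1)
    hopt' ht0 ht1
  simp only [norm_sub_rev (Y' _) (Y _)] at v2
  have LX := (lX ▸ hμ : IsP2 (P.map X)).memLp hX
  have LX' := (lX' ▸ hμ' : IsP2 (P.map X')).memLp hX'
  have LY := (lY ▸ hproj.1 : IsP2 (P.map Y)).memLp hY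
  have LY' := (lY' ▸ hproj'.1 : IsP2 (P.map Y')).memLp hY'
  have h4 : ∫ w, ‖Y' w - X w‖ ^ 2 ∂P + ∫ w, ‖Y w - X' w‖ ^ 2 ∂P ≤
      ∫ w, ‖Y w - X w‖ ^ 2 ∂P + ∫ w, ‖Y' w - X' w‖ ^ 2 ∂P + ∫ w, ‖X w - X' w‖ ^ 2 ∂P +
        ∫ w, ‖Y w - Y' w‖ ^ 2 ∂P := by
    have i1 := integrable_sq_sub LY' LX
    have i2 := integrable_sq_sub LY LX'
    have i3 := integrable_sq_sub LY LX
    have i4 := integrable_sq_sub LY' LX'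
    have i5 := integrable_sq_sub LX LX'
    have i6 := integrable_sq_sub LY LY'
    rw [← integral_add i1 i2, ← integral_add i3 i4, ← integral_add (i3.fun_add i4) i5,
      ← integral_add ((i3.fun_add i4).fun_add i5) i6]
    exact integral_mono (i1.add i2) (((i3.add i4).add i5).add i6)
      fun w => four_point (X w) (X' w) (Y w) (Y' w)
  have hD : ∫ w, ‖Y w - Y' w‖ ^ 2 ∂P ≤
      2 * (∫ x, ‖x‖ ^ 2 ∂μs + ∫ x, ‖x‖ ^ 2 ∂μs') := by
    have j1 := LY.integrable_norm_pow two_ne_zero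
    have j2 := LY'.integrable_norm_pow two_ne_zero
    rw [← lY, ← lY', integral_map hY.aemeasurable (by fun_prop),
      integral_map hY'.aemeasurable (by fun_prop), ← integral_add j1 j2, ← integral_const_mul]
    refine integral_mono (integrable_sq_sub LY LY') ((j1.add j2).const_mul 2) fun w => ?_
    have := parallelogram_law_with_norm ℝ (Y w) (Y' w)
    dsimp only
    nlinarith [sq_nonneg ‖Y w + Y' w‖]
  have h5 := mul_le_mul_of_nonneg_left h4 ht0
  have h6 := mul_le_mul_of_nonneg_left hD (sq_nonneg t)
  nlinarith

/-- Realization of the estimate: near-optimal couplings exist and can be glued together.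
The glued space is `((E × E) × E) × E`, with coordinates `X, X', Y, Y'` in this order. -/
lemma W2sq_proj_le {ν μ μ' μs μs' : Measure E} (hν : IsP2 ν) (hμ : IsP2 μ) (hμ' : IsP2 μ')
    (hproj : IsBackwardProj ν μ μs) (hproj' : IsBackwardProj ν μ' μs') {t : ℝ} (ht0 : 0 < t)
    (ht1 : t ≤ 1) :
    W2sq μs μs' ≤ W2sq μ μ' +
      (t ^ 2 + 4 * t * (∫ x, ‖x‖ ^ 2 ∂μs + ∫ x, ‖x‖ ^ 2 ∂μs') + 2 * t) := by
  have := FiniteDimensional.proper ℝ E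
  have hε : 0 < t ^ 2 := by positivity
  obtain ⟨γ, ⟨hγp, hγ1, hγ2⟩, hγ⟩ := exists_coupling_lt hμ hμ' hε
  obtain ⟨π, ⟨hπp, hπ1, hπ2⟩, hπ⟩ := exists_coupling_lt hproj.1 hμ hε
  obtain ⟨π', ⟨hπp', hπ1', hπ2'⟩, hπ'⟩ := exists_coupling_lt hproj'.1 hμ' hε
  obtain ⟨P, hP, hPγ, hPπ⟩ := exists_extension (P := γ) (X := Prod.fst) measurable_fst
    (π := π) (hπ2.trans hγ1.symm)
  have lX1' : P.map (fun w => w.1.2) = μ' := by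
    rw [← hγ2, ← hPγ, Measure.map_map measurable_snd measurable_fst]; rfl
  obtain ⟨Q, hQ, hQP, hQπ⟩ := exists_extension (P := P) (X := fun w => w.1.2) (by fun_prop)
    (π := π') (hπ2'.trans lX1'.symm)
  have hQγ : Q.map (fun w => w.1.1) = γ := by
    rw [← hPγ, ← hQP, Measure.map_map measurable_fst measurable_fst]; rfl
  have hQπ1 : Q.map (fun w => (w.1.2, w.1.1.1)) = π := by
    rw [← hPπ, ← hQP, Measure.map_map (by fun_prop) measurable_fst]; rfl
  have cost {κ : Measure (E × E)} {f : ((E × E) × E) × E → E × E} (hf : Measurable f)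
      (h : Q.map f = κ) : ∫ p, ‖p.1 - p.2‖ ^ 2 ∂κ = ∫ w, ‖(f w).1 - (f w).2‖ ^ 2 ∂Q := by
    rw [← h, integral_map hf.aemeasurable]
    exact (by fun_prop : Measurable fun p : E × E => ‖p.1 - p.2‖ ^ 2).aestronglyMeasurable
  rw [cost (by fun_prop) hQγ] at hγ
  rw [cost (by fun_prop) hQπ1] at hπ
  rw [cost (by fun_prop) hQπ] at hπ'
  have lX : Q.map (fun w => w.1.1.1) = μ := by
    rw [← hγ1, ← hQγ, Measure.map_map measurable_fst (by fun_prop)]; rfl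
  have lX' : Q.map (fun w => w.1.1.2) = μ' := by
    rw [← hγ2, ← hQγ, Measure.map_map measurable_snd (by fun_prop)]; rfl
  have lY : Q.map (fun w => w.1.2) = μs := by
    rw [← hπ1, ← hQπ1, Measure.map_map measurable_fst (by fun_prop)]; rfl
  have lY' : Q.map (fun w => w.2) = μs' := by
    rw [← hπ1', ← hQπ, Measure.map_map measurable_fst (by fun_prop)]; rfl
  have key := estimate (P := Q) hν hμ hμ' hproj hproj' (by fun_prop) (by fun_prop) (by fun_prop)
    (by fun_prop) lX lX' lY lY' hπ.le hπ'.le ht0.le ht1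
  have hW := W2sq_map_le_s4 (P := Q) (A := fun w => w.1.2) (B := fun w => w.2) (by fun_prop)
    (by fun_prop)
  rw [lY, lY'] at hW
  refine le_of_mul_le_mul_left ?_ ht0
  have h1 := mul_le_mul_of_nonneg_left hW ht0.le
  have h2 := mul_le_mul_of_nonneg_left hγ.le ht0.le
  linarith

end Euclidean

/-- the backward projection onto a fixed `ν` is non-expansive. -/
theorem stmt4 {d : ℕ} (hd : 1 ≤ d)
    (μ μ' ν μs μs' : Measure (EuclideanSpace ℝ (Fin d)))
    (hμ : IsP2 μ) (hμ' : IsP2 μ') (hν : IsP2 ν)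
    (hμs : IsBackwardProj ν μ μs) (hμs' : IsBackwardProj ν μ' μs') :
    W2 μs μs' ≤ W2 μ μ' := by
  refine Real.sqrt_le_sqrt ?_
  set M := ∫ x, ‖x‖ ^ 2 ∂μs + ∫ x, ‖x‖ ^ 2 ∂μs'
  have hlim : Tendsto (fun t : ℝ => W2sq μ μ' + (t ^ 2 + 4 * t * M + 2 * t)) (𝓝[>] 0)
      (𝓝 (W2sq μ μ')) := by
    have hc : Continuous fun t : ℝ => W2sq μ μ' + (t ^ 2 + 4 * t * M + 2 * t) := by fun_prop
    simpa using (hc.tendsto 0).mono_left nhdsWithin_le_nhds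
  refine ge_of_tendsto hlim ?_
  filter_upwards [Ioc_mem_nhdsGT (zero_lt_one' ℝ)] with t ht
  exact W2sq_proj_le hν hμ hμ' hμs hμs' ht.1 ht.2

end
end

section
/- Let t > 1 and let ν₀, ν₁, ν̃₀, ν̃₁ ∈ P₂(ℝ) be probability measures on the real line. If ρ is a metric extrapolation of (ν₀, ν₁) at time t and ρ̃ is a metric extrapolation of (ν̃₀, ν̃₁) at time t, then W₂(ρ, ρ̃) ≤ (t−1)·W₂(ν₀, ν̃₀) + t·W₂(ν₁, ν̃₁). -/
/-!
In one dimension `P₂(ℝ)` with `W₂` is isometric to the closed convex cone of nondecreasing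
functions in `L²(0,1)`, a measure corresponding to its quantile function (`W2sq_map`,
`exists_mem_monoCone`). The lower bound on the cost of an arbitrary coupling comes from writing
`(x - y)²` as the area of a square, which by Tonelli turns the cost into an integral of the masses
of quadrants `{x ≤ s, y > r}` (`lintegral_sq_eq`); the comonotone coupling minimizes each of them
(`quadrant_le`).

In the Hilbert space `L²(0,1)`, completing the square shows that the extrapolation functional is a
positive multiple of the squared distance to `t • f₁ - (t - 1) • f₀`, up to an additive constant.
A metric extrapolation is therefore the projection of that point on the convex cone
(`extrap_inner_le`). The projection is 1-Lipschitz, and the triangle inequality concludes.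
-/

open MeasureTheory

noncomputable section

variable {V : Type*} [NormedAddCommGroup V] [NormedSpace ℝ V]
  [MeasurableSpace V] [BorelSpace V]

/-- The reference measure: Lebesgue measure on the open unit interval. -/
def unitVol : Measure ℝ := (volume : Measure ℝ).restrict (Set.Ioo 0 1)

instance : IsProbabilityMeasure unitVol := ⟨by simp [unitVol]⟩

/-- The classes in `L²(0,1)` having a representative that is nondecreasing on `(0,1)`. -/
def monoCone : Set (Lp ℝ 2 unitVol) := {f | ∃ X : ℝ → ℝ, MonotoneOn X (Set.Ioo 0 1) ∧ f =ᵐ[unitVol] X}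

lemma ofReal_sq_sub (a b : ℝ) :
    ENNReal.ofReal ((a - b) ^ 2) =
      volume (Set.Ico a b ×ˢ Set.Ico a b) + volume (Set.Ico b a ×ˢ Set.Ico b a) := by
  rw [Measure.volume_eq_prod, Measure.prod_prod, Measure.prod_prod]
  simp only [Real.volume_Ico]
  rcases le_total a b with h | h
  · rw [ENNReal.ofReal_of_nonpos (p := a - b) (by linarith),
      ← ENNReal.ofReal_mul (by linarith)]
    simp only [mul_zero, add_zero]
    congr 1; ring
  · rw [ENNReal.ofReal_of_nonpos (p := b - a) (by linarith),
      ← ENNReal.ofReal_mul (by linarith)]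
    simp only [mul_zero, zero_add]
    congr 1; ring

lemma measurableSet_quadrant {α : Type*} [MeasurableSpace α] {a b m M : α → ℝ}
    (ha : Measurable a) (hm : Measurable m) (hM : Measurable M) (hb : Measurable b) :
    MeasurableSet {x | a x ≤ m x ∧ M x < b x} := by
  have h := (measurableSet_le ha hm).inter (measurableSet_lt hM hb)
  have e : {x | a x ≤ m x ∧ M x < b x} = {x | a x ≤ m x} ∩ {x | M x < b x} := by
    ext x; simp
  rwa [e]

/-- The squared distance is an area, so by Tonelli the transport cost of `π` is an integral of
`π`-masses of quadrants. -/
lemma lintegral_sq_eq (π : Measure (ℝ × ℝ)) [IsProbabilityMeasure π] :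
    ∫⁻ p, ENNReal.ofReal ((p.1 - p.2) ^ 2) ∂π =
      ∫⁻ z : ℝ × ℝ, (π {p | p.1 ≤ min z.1 z.2 ∧ max z.1 z.2 < p.2} +
        π {p | p.2 ≤ min z.1 z.2 ∧ max z.1 z.2 < p.1}) := by
  have hS : MeasurableSet {q : (ℝ × ℝ) × (ℝ × ℝ) |
      q.1.1 ≤ min q.2.1 q.2.2 ∧ max q.2.1 q.2.2 < q.1.2} :=
    measurableSet_quadrant (by fun_prop) (by fun_prop) (by fun_prop) (by fun_prop)
  have hT : MeasurableSet {q : (ℝ × ℝ) × (ℝ × ℝ) |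
      q.1.2 ≤ min q.2.1 q.2.2 ∧ max q.2.1 q.2.2 < q.1.1} :=
    measurableSet_quadrant (by fun_prop) (by fun_prop) (by fun_prop) (by fun_prop)
  have h1 := Measure.prod_apply (μ := π) (ν := (volume : Measure (ℝ × ℝ))) hS
  rw [Measure.prod_apply_symm hS] at h1
  have h2 := Measure.prod_apply (μ := π) (ν := (volume : Measure (ℝ × ℝ))) hT
  rw [Measure.prod_apply_symm hT] at h2
  have hsq : ∀ a b : ℝ, Set.Ico a b ×ˢ Set.Ico a b =
      {z : ℝ × ℝ | a ≤ min z.1 z.2 ∧ max z.1 z.2 < b} := by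
    intro a b
    ext z
    simp only [Set.mem_prod, Set.mem_Ico, Set.mem_ofPred_eq, le_min_iff, max_lt_iff]
    tauto
  simp_rw [ofReal_sq_sub, hsq]
  refine (lintegral_add_left (measurable_measure_prodMk_left hS) _).trans
    (Eq.trans ?_ (lintegral_add_left (measurable_measure_prodMk_right hS) _).symm)
  exact congrArg₂ (· + ·) h1.symm h2.symm

/-- Sublevel sets of two nondecreasing functions are nested, so the comonotone coupling has the
least possible mass on each quadrant `{x ≤ s, y > r}`. -/
lemma quadrant_le {f g X Y : ℝ → ℝ} (hf : Measurable f) (hg : Measurable g)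
    (hX : MonotoneOn X (Set.Ioo 0 1)) (hY : MonotoneOn Y (Set.Ioo 0 1))
    (hfX : f =ᵐ[unitVol] X) (hgY : g =ᵐ[unitVol] Y)
    {α : Type*} [MeasurableSpace α] (π : Measure α) [IsProbabilityMeasure π]
    {p q : α → ℝ} (hp : Measurable p) (hq : Measurable q)
    (h1 : π.map p = unitVol.map f) (h2 : π.map q = unitVol.map g) (s r : ℝ) :
    unitVol {u | f u ≤ s ∧ r < g u} ≤ π {x | p x ≤ s ∧ r < q x} := by
  have hI : ∀ᵐ u ∂unitVol, u ∈ Set.Ioo (0 : ℝ) 1 := ae_restrict_mem measurableSet_Ioo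
  by_cases hn : ∃ u ∈ Set.Ioo (0 : ℝ) 1, X u ≤ s ∧ r < Y u
  · obtain ⟨u, hu, hXu, hYu⟩ := hn
    -- below `u` one has `X ≤ s`, above `u` one has `r < Y`, so `{Y ≤ r} ⊆ {X ≤ s}`
    have hsub : {v | g v ≤ r} ≤ᵐ[unitVol] {v | f v ≤ s} := by
      filter_upwards [hI, hfX, hgY] with v hv hfv hgv (hvr : g v ≤ r)
      change f v ≤ s
      rw [hfv]; rw [hgv] at hvr
      rcases le_total v u with h | h
      · exact (hX hv hu h).trans hXu
      · exact absurd (hY hu hv h) (by linarith)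
    have e1 : π {x | p x ≤ s} = unitVol {v | f v ≤ s} := by
      have := congrArg (fun m => m (Set.Iic s)) h1
      rw [Measure.map_apply hp measurableSet_Iic, Measure.map_apply hf measurableSet_Iic] at this
      exact this
    have e2 : π {x | q x ≤ r} = unitVol {v | g v ≤ r} := by
      have := congrArg (fun m => m (Set.Iic r)) h2
      rw [Measure.map_apply hq measurableSet_Iic, Measure.map_apply hg measurableSet_Iic] at this
      exact this
    have d1 : {u | f u ≤ s ∧ r < g u} = {v | f v ≤ s} \ {v | g v ≤ r} := by
      ext v; simp
    have d2 : {x | p x ≤ s ∧ r < q x} = {x | p x ≤ s} \ {x | q x ≤ r} := by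
      ext v; simp
    have hm : MeasurableSet {v | g v ≤ r} := measurableSet_le hg measurable_const
    have key : unitVol ({v | f v ≤ s} \ {v | g v ≤ r}) =
        unitVol {v | f v ≤ s} - unitVol {v | g v ≤ r} := by
      rw [measure_sdiff' _ hm.nullMeasurableSet (measure_ne_top _ _)]
      congr 1
      apply measure_congr
      filter_upwards [hsub] with v hv
      exact propext ⟨fun h => h.elim id hv, Or.inl⟩
    rw [d1, d2, key, ← e1, ← e2]
    exact le_measure_sdiff
  · have : unitVol {u | f u ≤ s ∧ r < g u} = 0 := by
      rw [measure_eq_zero_iff_ae_notMem]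
      filter_upwards [hI, hfX, hgY] with v hv hfv hgv hmem
      exact hn ⟨v, hv, by rw [← hfv]; exact hmem.1, by rw [← hgv]; exact hmem.2⟩
    rw [this]; exact zero_le

/-- Sending a class to its law is an isometry from the cone, with the `L²` distance, to `(P₂(ℝ), W₂)`. -/
lemma W2sq_map {f g : Lp ℝ 2 unitVol} (hf : f ∈ monoCone) (hg : g ∈ monoCone) :
    W2sq (unitVol.map f) (unitVol.map g) = ‖f - g‖ ^ 2 := by
  have mf : Measurable f := (Lp.stronglyMeasurable f).measurable
  have mg : Measurable g := (Lp.stronglyMeasurable g).measurable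
  obtain ⟨X, hX, hfX⟩ := hf
  obtain ⟨Y, hY, hgY⟩ := hg
  have hnorm : ‖f - g‖ ^ 2 = ∫ u, (f u - g u) ^ 2 ∂unitVol := by
    rw [← real_inner_self_eq_norm_sq, L2.inner_def]
    apply integral_congr_ae
    filter_upwards [Lp.coeFn_sub f g] with u hu
    rw [hu, Pi.sub_apply]
    simp [sq]
  have mfg : Measurable fun u => (f u, g u) := mf.prodMk mg
  set π₀ := unitVol.map fun u => (f u, g u) with hπ₀
  have : IsProbabilityMeasure π₀ := Measure.isProbabilityMeasure_map mfg.aemeasurable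
  have hc₀ : IsCoupling π₀ (unitVol.map f) (unitVol.map g) := by
    refine ⟨inferInstance, ?_, ?_⟩
    · rw [hπ₀, Measure.map_map measurable_fst mfg]; rfl
    · rw [hπ₀, Measure.map_map measurable_snd mfg]; rfl
  have hcost₀ : ∫ p, ‖p.1 - p.2‖ ^ 2 ∂π₀ = ∫ u, (f u - g u) ^ 2 ∂unitVol := by
    rw [hπ₀, integral_map mfg.aemeasurable (by fun_prop)]
    simp
  rw [hnorm]
  apply IsLeast.csInf_eq
  refine ⟨⟨π₀, hc₀, hcost₀.symm⟩, ?_⟩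
  rintro c ⟨π, ⟨hπ, hπ1, hπ2⟩, rfl⟩
  rw [← hcost₀]
  simp only [Real.norm_eq_abs, sq_abs]
  have i1 : Integrable (fun p : ℝ × ℝ => p.1 ^ 2) π := by
    have : Integrable (fun x : ℝ => x ^ 2) (π.map Prod.fst) := by
      rw [hπ1, integrable_map_measure (by fun_prop) mf.aemeasurable]
      exact (Lp.memLp f).integrable_sq
    exact (integrable_map_measure (by fun_prop) (by fun_prop)).1 this
  have i2 : Integrable (fun p : ℝ × ℝ => p.2 ^ 2) π := by
    have : Integrable (fun x : ℝ => x ^ 2) (π.map Prod.snd) := by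
      rw [hπ2, integrable_map_measure (by fun_prop) mg.aemeasurable]
      exact (Lp.memLp g).integrable_sq
    exact (integrable_map_measure (by fun_prop) (by fun_prop)).1 this
  have i3 : Integrable (fun p : ℝ × ℝ => (p.1 - p.2) ^ 2) π := by
    refine ((i1.const_mul 2).add (i2.const_mul 2)).mono' (by fun_prop) ?_
    filter_upwards with p
    rw [Real.norm_of_nonneg (sq_nonneg _)]
    simp only [Pi.add_apply]
    nlinarith [sq_nonneg (p.1 + p.2)]
  rw [integral_eq_lintegral_of_nonneg_ae (ae_of_all _ fun _ => sq_nonneg _) (by fun_prop),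
    integral_eq_lintegral_of_nonneg_ae (ae_of_all _ fun _ => sq_nonneg _) (by fun_prop)]
  refine ENNReal.toReal_mono ?_ ?_
  · have := i3.lintegral_lt_top
    exact this.ne
  rw [lintegral_sq_eq, lintegral_sq_eq]
  refine lintegral_mono fun z => ?_
  have a1 : MeasurableSet {p : ℝ × ℝ | p.1 ≤ min z.1 z.2 ∧ max z.1 z.2 < p.2} :=
    measurableSet_quadrant (by fun_prop) (by fun_prop) (by fun_prop) (by fun_prop)
  have a2 : MeasurableSet {p : ℝ × ℝ | p.2 ≤ min z.1 z.2 ∧ max z.1 z.2 < p.1} :=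
    measurableSet_quadrant (by fun_prop) (by fun_prop) (by fun_prop) (by fun_prop)
  rw [hπ₀, Measure.map_apply mfg a1, Measure.map_apply mfg a2]
  exact add_le_add
    (quadrant_le mf mg hX hY hfX hgY π measurable_fst measurable_snd hπ1 hπ2 _ _)
    (quadrant_le mg mf hY hX hgY hfX π measurable_snd measurable_fst hπ2 hπ1 _ _)

lemma isP2_map (f : Lp ℝ 2 unitVol) : IsP2 (unitVol.map f) := by
  have mf : Measurable f := (Lp.stronglyMeasurable f).measurable
  refine ⟨Measure.isProbabilityMeasure_map mf.aemeasurable, ?_⟩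
  rw [integrable_map_measure (by fun_prop) mf.aemeasurable]
  simpa [Function.comp_def] using (Lp.memLp f).integrable_sq

open ProbabilityTheory Filter Topology in
/-- The quantile function `u ↦ inf {x | u ≤ cdf μ x}` pushes Lebesgue measure to `μ`, so every
measure in `P₂(ℝ)` is the law of an element of the cone. -/
lemma exists_mem_monoCone {μ : Measure ℝ} (hμ : IsP2 μ) :
    ∃ f ∈ monoCone, unitVol.map f = μ := by
  obtain ⟨hP, hI⟩ := hμ
  set X : ℝ → ℝ := fun u => sInf {x | u ≤ cdf μ x} with hXdef
  have hne : ∀ u ∈ Set.Ioo (0 : ℝ) 1, {x | u ≤ cdf μ x}.Nonempty := fun u hu =>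
    (((tendsto_cdf_atTop μ).eventually (eventually_ge_nhds hu.2))).exists
  have hbdd : ∀ u ∈ Set.Ioo (0 : ℝ) 1, BddBelow {x | u ≤ cdf μ x} := by
    intro u hu
    obtain ⟨a, ha⟩ := ((tendsto_cdf_atBot μ).eventually (eventually_lt_nhds hu.1)).exists
    refine ⟨a, fun x hx => ?_⟩
    by_contra! hlt
    exact absurd (monotone_cdf μ hlt.le) (not_le.2 (ha.trans_le hx))
  have hgal : ∀ u ∈ Set.Ioo (0 : ℝ) 1, ∀ x, X u ≤ x ↔ u ≤ cdf μ x := by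
    intro u hu x
    refine ⟨fun h => ?_, fun h => csInf_le (hbdd u hu) h⟩
    -- right continuity of the cdf
    have hev : ∀ y ∈ Set.Ioi x, u ≤ cdf μ y := by
      intro y hy
      obtain ⟨w, hw, hwy⟩ := exists_lt_of_csInf_lt (hne u hu) (h.trans_lt hy)
      exact le_trans hw (monotone_cdf μ hwy.le)
    have hrc : Tendsto (cdf μ) (𝓝[>] x) (𝓝 (cdf μ x)) :=
      ((cdf μ).right_continuous x).mono_left (nhdsWithin_mono _ Set.Ioi_subset_Ici_self)
    exact ge_of_tendsto hrc (eventually_nhdsWithin_of_forall hev)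
  have hmono : MonotoneOn X (Set.Ioo 0 1) := fun u hu v hv huv =>
    (hgal u hu _).2 (huv.trans ((hgal v hv _).1 le_rfl))
  have hmeas : AEMeasurable X unitVol := aemeasurable_restrict_of_monotoneOn measurableSet_Ioo hmono
  have hmap : unitVol.map X = μ := by
    have : IsProbabilityMeasure (unitVol.map X) := Measure.isProbabilityMeasure_map hmeas
    refine Measure.ext_of_Iic _ _ fun x => ?_
    rw [Measure.map_apply_of_aemeasurable hmeas measurableSet_Iic, ← ofReal_cdf μ x]
    have hae : (X ⁻¹' Set.Iic x) =ᵐ[unitVol] Set.Iic (cdf μ x) := by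
      filter_upwards [ae_restrict_mem measurableSet_Ioo] with u hu
      exact propext (hgal u hu x)
    rw [measure_congr hae, unitVol, Measure.restrict_congr_set Ioo_ae_eq_Ioc,
      Measure.restrict_apply measurableSet_Iic]
    have : Set.Iic (cdf μ x) ∩ Set.Ioc 0 1 = Set.Ioc 0 (cdf μ x) := by
      ext u
      simp only [Set.mem_inter_iff, Set.mem_Iic, Set.mem_Ioc]
      exact ⟨fun h => ⟨h.2.1, h.1⟩, fun h => ⟨h.2, h.1, h.2.trans (cdf_le_one μ x)⟩⟩
    rw [this, Real.volume_Ioc, sub_zero]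
  have hL : MemLp X 2 unitVol := by
    rw [memLp_two_iff_integrable_sq hmeas.aestronglyMeasurable]
    rw [← hmap, integrable_map_measure (by fun_prop) hmeas] at hI
    simpa [Function.comp_def] using hI
  refine ⟨hL.toLp X, ⟨X, hmono, hL.coeFn_toLp⟩, ?_⟩
  rw [Measure.map_congr hL.coeFn_toLp, hmap]

lemma convex_monoCone : Convex ℝ monoCone := by
  rintro f ⟨X, hX, hfX⟩ g ⟨Y, hY, hgY⟩ a b ha hb -
  refine ⟨fun u => a * X u + b * Y u, fun u hu v hv huv => ?_, ?_⟩
  · exact add_le_add (mul_le_mul_of_nonneg_left (hX hu hv huv) ha)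
      (mul_le_mul_of_nonneg_left (hY hu hv huv) hb)
  · filter_upwards [hfX, hgY, Lp.coeFn_add (a • f) (b • g), Lp.coeFn_smul a f,
      Lp.coeFn_smul b g] with u h1 h2 h3 h4 h5
    rw [h3, Pi.add_apply, h4, h5, Pi.smul_apply, Pi.smul_apply, h1, h2, smul_eq_mul, smul_eq_mul]

/-- Completing the square: the extrapolation functional is, up to a positive factor and an additive
constant, the squared distance to `t • x₁ - (t - 1) • x₀`. -/
lemma extrap_identity {E : Type*} [NormedAddCommGroup E] [InnerProductSpace ℝ E]
    {t : ℝ} (ht : 1 < t) (x x₀ x₁ : E) :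
    ‖x - x₁‖ ^ 2 / (2 * (t - 1)) - ‖x - x₀‖ ^ 2 / (2 * t) =
      (‖(t • x₁ - (t - 1) • x₀) - x‖ ^ 2 - t * (t - 1) * ‖x₁ - x₀‖ ^ 2) /
        (2 * t * (t - 1)) := by
  have h1 : t - 1 ≠ 0 := by linarith
  have h2 : t ≠ 0 := by linarith
  simp only [← real_inner_self_eq_norm_sq, inner_sub_left, inner_sub_right, inner_smul_left,
    inner_smul_right, real_inner_comm x₁ x, real_inner_comm x₀ x, real_inner_comm x₁ x₀]
  simp only [conj_trivial]
  field_simp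
  ring

/-- A metric extrapolation is represented by the projection of `t • f₁ - (t - 1) • f₀` on the cone;
this is the corresponding variational inequality. -/
lemma extrap_inner_le {t : ℝ} (ht : 1 < t) {f f₀ f₁ : Lp ℝ 2 unitVol}
    (hf : f ∈ monoCone) (h₀ : f₀ ∈ monoCone) (h₁ : f₁ ∈ monoCone)
    (h : IsMetricExtrap t (unitVol.map f₀) (unitVol.map f₁) (unitVol.map f)) :
    ∀ g ∈ monoCone, inner ℝ ((t • f₁ - (t - 1) • f₀) - f) (g - f) ≤ 0 := by
  rw [← norm_eq_iInf_iff_real_inner_le_zero convex_monoCone hf]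
  have hpos : 0 < 2 * t * (t - 1) := by nlinarith
  have : Nonempty monoCone := ⟨⟨f, hf⟩⟩
  refine le_antisymm (le_ciInf fun g => ?_)
    (ciInf_le (f := fun w : monoCone => ‖(t • f₁ - (t - 1) • f₀) - (w : Lp ℝ 2 unitVol)‖)
      ⟨0, by rintro _ ⟨w, rfl⟩; exact norm_nonneg _⟩ ⟨f, hf⟩)
  have hg := h.2 _ (isP2_map (g : Lp ℝ 2 unitVol))
  rw [W2sq_map hf h₁, W2sq_map hf h₀, W2sq_map g.2 h₁, W2sq_map g.2 h₀,
    extrap_identity ht, extrap_identity ht, div_le_div_iff_of_pos_right hpos] at hg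
  exact le_of_sq_le_sq (by linarith) (norm_nonneg _)

lemma W2_map {f g : Lp ℝ 2 unitVol} (hf : f ∈ monoCone) (hg : g ∈ monoCone) :
    W2 (unitVol.map f) (unitVol.map g) = ‖f - g‖ := by
  rw [W2, W2sq_map hf hg, Real.sqrt_sq (norm_nonneg _)]

/-- stability of the metric extrapolation in one dimension. -/
theorem stmt6 (t : ℝ) (ht : 1 < t)
    (ν₀ ν₁ ν₀' ν₁' ρ ρ' : Measure ℝ)
    (hν₀ : IsP2 ν₀) (hν₁ : IsP2 ν₁) (hν₀' : IsP2 ν₀') (hν₁' : IsP2 ν₁')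
    (hρ : IsMetricExtrap t ν₀ ν₁ ρ) (hρ' : IsMetricExtrap t ν₀' ν₁' ρ') :
    W2 ρ ρ' ≤ (t - 1) * W2 ν₀ ν₀' + t * W2 ν₁ ν₁' := by
  obtain ⟨f₀, m₀, rfl⟩ := exists_mem_monoCone hν₀
  obtain ⟨f₁, m₁, rfl⟩ := exists_mem_monoCone hν₁
  obtain ⟨g₀, n₀, rfl⟩ := exists_mem_monoCone hν₀'
  obtain ⟨g₁, n₁, rfl⟩ := exists_mem_monoCone hν₁'
  obtain ⟨f, m, rfl⟩ := exists_mem_monoCone hρ.1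
  obtain ⟨g, n, rfl⟩ := exists_mem_monoCone hρ'.1
  rw [W2_map m n, W2_map m₀ n₀, W2_map m₁ n₁]
  have h1 := extrap_inner_le ht m m₀ m₁ hρ g n
  have h2 := extrap_inner_le ht n n₀ n₁ hρ' f m
  set w := t • f₁ - (t - 1) • f₀ with hw
  set v := t • g₁ - (t - 1) • g₀ with hv
  -- adding the two variational inequalities gives `‖f - g‖² ≤ ⟪w - v, f - g⟫`
  have hproj : ‖f - g‖ ≤ ‖w - v‖ := by
    have h3 : ‖f - g‖ ^ 2 ≤ inner ℝ (w - v) (f - g) := by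
      rw [← real_inner_self_eq_norm_sq]
      simp only [inner_sub_left, inner_sub_right] at h1 h2 ⊢
      linarith
    have h4 := h3.trans (real_inner_le_norm _ _)
    rcases (norm_nonneg (f - g)).eq_or_lt with h0 | h0
    · rw [← h0]; exact norm_nonneg _
    · rw [sq] at h4
      exact le_of_mul_le_mul_right h4 h0
  have hdec : w - v = t • (f₁ - g₁) - (t - 1) • (f₀ - g₀) := by
    rw [hw, hv, smul_sub, smul_sub]; abel
  calc ‖f - g‖ ≤ ‖t • (f₁ - g₁) - (t - 1) • (f₀ - g₀)‖ := hdec ▸ hproj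
    _ ≤ ‖t • (f₁ - g₁)‖ + ‖(t - 1) • (f₀ - g₀)‖ := norm_sub_le _ _
    _ = (t - 1) * ‖f₀ - g₀‖ + t * ‖f₁ - g₁‖ := by
      rw [norm_smul, norm_smul, Real.norm_of_nonneg (by linarith : 0 ≤ t),
        Real.norm_of_nonneg (by linarith : 0 ≤ t - 1), add_comm]

end
end

section
/- Let γ, γ̃ : [0,1] → P₂(ℝ) be constant-speed minimizing geodesics for the 2-Wasserstein distance on probability measures on the real line. Then for every s ∈ [0,1], W₂(γ(s), γ̃(s)) ≤ (1−s)·W₂(γ(0), γ̃(0)) + s·W₂(γ(1), γ̃(1)). -/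
/-!
On the real line, `W₂` is a Hilbert distance: if `Q_μ` denotes the quantile function of `μ`, then
`μ ↦ Q_μ` is an isometric embedding of `P₂(ℝ)` into `L²(0,1)` (`W2sq_eq_integral_quantile`).
The point is the optimality of the coupling `(Q_μ, Q_ν)`.  For `q` in the plane write
`a = min q.1 q.2` and `b = max q.1 q.2`; then `(x - y)²` is the area of `{q | x ≤ a, b < y}` plus
that of `{q | y ≤ a, b < x}`.  By Tonelli, the cost of a coupling `π`, the law of `(X, Y)`, is the
integral over `q` of `π (X ≤ a, b < Y) + π (Y ≤ a, b < X)` (`lintegral_sq_eq_crossing`).  Each of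
these probabilities is at least the positive part of a difference of distribution functions, and
the quantile coupling attains this bound (`quantile_crossing_le`).

A constant-speed geodesic is therefore mapped to points `q₀, q_s, q₁` of `L²(0,1)` with
`‖q₀ - q_s‖ = s ‖q₀ - q₁‖` and `‖q_s - q₁‖ = (1 - s) ‖q₀ - q₁‖`; strict convexity forces
`q_s = (1 - s) q₀ + s q₁`, and the claim is the triangle inequality in `L²(0,1)`.
-/

open MeasureTheory

noncomputable section

variable {V : Type*} [NormedAddCommGroup V] [NormedSpace ℝ V]
  [MeasurableSpace V] [BorelSpace V]

open Set ProbabilityTheory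

/-- Lebesgue measure on the open unit interval. -/
def unitLeb : Measure ℝ := volume.restrict (Ioo (0 : ℝ) 1)

instance : IsProbabilityMeasure unitLeb := ⟨by simp [unitLeb]⟩

/-- The left-continuous quantile function of `μ`. It is meaningful on `(0, 1)` only: elsewhere
`sInf` may be taken over an empty or unbounded set. -/
def quantile (μ : Measure ℝ) (u : ℝ) : ℝ := sInf {x | u ≤ cdf μ x}

lemma quantile_le_iff (μ : Measure ℝ) {u : ℝ} (hu : u ∈ Ioo (0 : ℝ) 1) (x : ℝ) :
    quantile μ u ≤ x ↔ u ≤ cdf μ x := by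
  have hne : {x | u ≤ cdf μ x}.Nonempty :=
    (((tendsto_cdf_atTop μ).eventually (lt_mem_nhds hu.2)).exists).imp fun _ h => h.le
  obtain ⟨m, hm⟩ := ((tendsto_cdf_atBot μ).eventually (gt_mem_nhds hu.1)).exists
  have hbdd : BddBelow {x | u ≤ cdf μ x} := by
    refine ⟨m, fun y hy => ?_⟩
    by_contra! h
    exact absurd (hy.trans (monotone_cdf μ h.le)) (not_le.2 hm)
  refine ⟨fun h => ?_, fun h => csInf_le hbdd h⟩
  -- Right continuity of the distribution function: it suffices to look at points `y > x`.
  have key : ∀ y ∈ Ioi x, u ≤ cdf μ y := fun y hy => by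
    obtain ⟨z, hz, hzy⟩ := exists_lt_of_csInf_lt hne (lt_of_le_of_lt h hy)
    exact le_trans hz (monotone_cdf μ hzy.le)
  have ht : Filter.Tendsto (cdf μ) (nhdsWithin x (Ioi x)) (nhds (cdf μ x)) :=
    ((cdf μ).right_continuous x).mono_left (nhdsWithin_mono _ Ioi_subset_Ici_self)
  exact ge_of_tendsto ht (Filter.eventually_of_mem self_mem_nhdsWithin key)

lemma aemeasurable_quantile (μ : Measure ℝ) : AEMeasurable (quantile μ) unitLeb := by
  refine aemeasurable_restrict_of_monotoneOn measurableSet_Ioo fun u hu v hv huv => ?_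
  rw [quantile_le_iff μ hu]
  exact huv.trans ((quantile_le_iff μ hv _).1 le_rfl)

lemma map_quantile (μ : Measure ℝ) [IsProbabilityMeasure μ] :
    unitLeb.map (quantile μ) = μ := by
  have := Measure.isProbabilityMeasure_map (aemeasurable_quantile μ)
  refine Measure.ext_of_Iic _ _ fun x => ?_
  rw [Measure.map_apply_of_aemeasurable (aemeasurable_quantile μ) measurableSet_Iic, unitLeb,
    Measure.restrict_apply' measurableSet_Ioo, ← ofReal_cdf]
  have h : quantile μ ⁻¹' Iic x ∩ Ioo 0 1 = Iic (cdf μ x) ∩ Ioo 0 1 := by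
    ext u
    simp only [mem_inter_iff, mem_preimage, mem_Iic]
    exact and_congr_left fun hu => quantile_le_iff μ hu x
  rw [h]
  have h0 := cdf_nonneg μ x
  have h1 := cdf_le_one μ x
  refine le_antisymm ?_ ?_
  · calc _ ≤ volume (Ioc 0 (cdf μ x)) := measure_mono fun u hu => ⟨hu.2.1, hu.1⟩
      _ = _ := by simp
  · calc _ = volume (Ioo 0 (cdf μ x)) := by simp
      _ ≤ volume (Iic (cdf μ x) ∩ Ioo 0 1) :=
        measure_mono fun u hu => ⟨hu.2.le, hu.1, hu.2.trans_le h1⟩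

/-- The quantile coupling minimizes the probability of `X ≤ a, b < Y` among all couplings. -/
lemma quantile_crossing_le {μ ν : Measure ℝ} [IsProbabilityMeasure μ] [IsProbabilityMeasure ν]
    {π : Measure (ℝ × ℝ)} (h1 : π.map Prod.fst = μ) (h2 : π.map Prod.snd = ν) (a b : ℝ) :
    unitLeb {u | quantile μ u ≤ a ∧ b < quantile ν u} ≤ π {p | p.1 ≤ a ∧ b < p.2} := by
  have hl : unitLeb {u | quantile μ u ≤ a ∧ b < quantile ν u}
      ≤ ENNReal.ofReal (cdf μ a - cdf ν b) := by
    rw [unitLeb, Measure.restrict_apply' measurableSet_Ioo, ← Real.volume_Ioc]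
    refine measure_mono ?_
    rintro u ⟨⟨hu1, hu2⟩, hu⟩
    refine ⟨?_, (quantile_le_iff μ hu a).1 hu1⟩
    by_contra! h
    exact absurd ((quantile_le_iff ν hu b).2 h) (not_le.2 hu2)
  refine hl.trans ?_
  rw [ENNReal.ofReal_sub _ (cdf_nonneg _ _), ofReal_cdf, ofReal_cdf, tsub_le_iff_right]
  calc μ (Iic a) = π (Prod.fst ⁻¹' Iic a) := by
        rw [← h1, Measure.map_apply measurable_fst measurableSet_Iic]
    _ ≤ π ({p | p.1 ≤ a ∧ b < p.2} ∪ Prod.snd ⁻¹' Iic b) := by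
        refine measure_mono fun p hp => ?_
        by_cases h : b < p.2
        · exact Or.inl ⟨hp, h⟩
        · exact Or.inr (not_lt.1 h)
    _ ≤ _ := measure_union_le _ _
    _ = _ := by rw [← h2, Measure.map_apply measurable_snd measurableSet_Iic]

lemma measurableSet_crossing {α : Type*} [MeasurableSpace α] {f g h k : α → ℝ}
    (hf : Measurable f) (hg : Measurable g) (hh : Measurable h) (hk : Measurable k) :
    MeasurableSet {p | f p ≤ g p ∧ h p < k p} :=
  (measurableSet_le hf hg).inter (measurableSet_lt hh hk)

/-- Layer-cake formula for the quadratic cost. The half `((y - x)⁺)²` is the area of the square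
`[x, y)²`, that is, of the set of `q` with `x ≤ min q.1 q.2` and `max q.1 q.2 < y`. -/
lemma lintegral_sq_eq_crossing (π : Measure (ℝ × ℝ)) [IsProbabilityMeasure π] :
    ∫⁻ p, ENNReal.ofReal ((p.1 - p.2) ^ 2) ∂π =
      ∫⁻ q : ℝ × ℝ, (π {p | p.1 ≤ min q.1 q.2 ∧ max q.1 q.2 < p.2} +
        π {p | p.2 ≤ min q.1 q.2 ∧ max q.1 q.2 < p.1}) := by
  have half : ∀ f g : ℝ × ℝ → ℝ, Measurable f → Measurable g →
      Measurable (fun q : ℝ × ℝ => π {p | f p ≤ min q.1 q.2 ∧ max q.1 q.2 < g p}) ∧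
      ∫⁻ p, ENNReal.ofReal (g p - f p) ^ 2 ∂π =
        ∫⁻ q : ℝ × ℝ, π {p | f p ≤ min q.1 q.2 ∧ max q.1 q.2 < g p} := by
    intro f g hf hg
    have hS : MeasurableSet {r : (ℝ × ℝ) × (ℝ × ℝ) |
        f r.1 ≤ min r.2.1 r.2.2 ∧ max r.2.1 r.2.2 < g r.1} :=
      measurableSet_crossing (by fun_prop) (by fun_prop) (by fun_prop) (by fun_prop)
    refine ⟨measurable_measure_prodMk_right hS, ?_⟩
    have e1 := Measure.prod_apply (μ := π) (ν := (volume : Measure (ℝ × ℝ))) hS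
    have e2 := Measure.prod_apply_symm (μ := π) (ν := (volume : Measure (ℝ × ℝ))) hS
    refine Eq.trans (lintegral_congr fun p => ?_) (e1.symm.trans e2)
    have : (Prod.mk p ⁻¹' {r : (ℝ × ℝ) × (ℝ × ℝ) |
        f r.1 ≤ min r.2.1 r.2.2 ∧ max r.2.1 r.2.2 < g r.1})
        = Ico (f p) (g p) ×ˢ Ico (f p) (g p) := by
      ext q
      simp only [mem_preimage, mem_ofPred_eq, le_min_iff, max_lt_iff, mem_prod, mem_Ico]
      tauto
    rw [this, Measure.volume_eq_prod, Measure.prod_prod, Real.volume_Ico, sq]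
  obtain ⟨m1, h1⟩ := half Prod.fst Prod.snd measurable_fst measurable_snd
  obtain ⟨m2, h2⟩ := half Prod.snd Prod.fst measurable_snd measurable_fst
  rw [lintegral_add_left m1, ← h1, ← h2, ← lintegral_add_left (by fun_prop)]
  refine lintegral_congr fun p => ?_
  rcases le_total p.1 p.2 with h | h
  · rw [ENNReal.ofReal_of_nonpos (sub_nonpos.2 h), ← ENNReal.ofReal_pow (sub_nonneg.2 h),
      ← neg_sub, neg_sq]
    simp
  · rw [ENNReal.ofReal_of_nonpos (sub_nonpos.2 h), ← ENNReal.ofReal_pow (sub_nonneg.2 h)]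
    simp

/-- The coupling of `μ` and `ν` by their quantile functions. -/
def quantileCoupling (μ ν : Measure ℝ) : Measure (ℝ × ℝ) :=
  unitLeb.map fun u => (quantile μ u, quantile ν u)

lemma isCoupling_quantileCoupling (μ ν : Measure ℝ) [IsProbabilityMeasure μ]
    [IsProbabilityMeasure ν] : IsCoupling (quantileCoupling μ ν) μ ν := by
  have hm := (aemeasurable_quantile μ).prodMk (aemeasurable_quantile ν)
  refine ⟨Measure.isProbabilityMeasure_map hm, ?_, ?_⟩
  · rw [quantileCoupling, AEMeasurable.map_map_of_aemeasurable measurable_fst.aemeasurable hm]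
    exact map_quantile μ
  · rw [quantileCoupling, AEMeasurable.map_map_of_aemeasurable measurable_snd.aemeasurable hm]
    exact map_quantile ν

lemma lintegral_quantileCoupling_le {μ ν : Measure ℝ} [IsProbabilityMeasure μ]
    [IsProbabilityMeasure ν] {π : Measure (ℝ × ℝ)} (hπ : IsCoupling π μ ν) :
    ∫⁻ p, ENNReal.ofReal ((p.1 - p.2) ^ 2) ∂(quantileCoupling μ ν) ≤
      ∫⁻ p, ENNReal.ofReal ((p.1 - p.2) ^ 2) ∂π := by
  have hm := (aemeasurable_quantile μ).prodMk (aemeasurable_quantile ν)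
  obtain ⟨hp, h1, h2⟩ := hπ
  have := (isCoupling_quantileCoupling μ ν).1
  rw [lintegral_sq_eq_crossing, lintegral_sq_eq_crossing]
  refine lintegral_mono fun q => add_le_add ?_ ?_
  · rw [quantileCoupling, Measure.map_apply_of_aemeasurable hm
      (measurableSet_crossing (by fun_prop) (by fun_prop) (by fun_prop) (by fun_prop))]
    exact quantile_crossing_le h1 h2 _ _
  · rw [quantileCoupling, Measure.map_apply_of_aemeasurable hm
      (measurableSet_crossing (by fun_prop) (by fun_prop) (by fun_prop) (by fun_prop))]
    -- The second term is the first one for the transposed coupling.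
    have h := quantile_crossing_le (π := π.map Prod.swap) (μ := ν) (ν := μ)
      (by rw [Measure.map_map measurable_fst measurable_swap]; exact h2)
      (by rw [Measure.map_map measurable_snd measurable_swap]; exact h1)
      (min q.1 q.2) (max q.1 q.2)
    rw [Measure.map_apply measurable_swap
      (measurableSet_crossing (by fun_prop) (by fun_prop) (by fun_prop) (by fun_prop))] at h
    exact h

lemma integrable_cost {μ ν : Measure ℝ} (hμ : IsP2 μ) (hν : IsP2 ν)
    {π : Measure (ℝ × ℝ)} (hπ : IsCoupling π μ ν) :
    Integrable (fun p : ℝ × ℝ => (p.1 - p.2) ^ 2) π := by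
  obtain ⟨hp, h1, h2⟩ := hπ
  have m1 : MemLp (fun p : ℝ × ℝ => p.1) 2 π := by
    have h : MemLp id 2 (π.map Prod.fst) := by
      rw [h1]
      exact (memLp_two_iff_integrable_sq_norm aestronglyMeasurable_id).2 hμ.2
    exact h.comp_of_map measurable_fst.aemeasurable
  have m2 : MemLp (fun p : ℝ × ℝ => p.2) 2 π := by
    have h : MemLp id 2 (π.map Prod.snd) := by
      rw [h2]
      exact (memLp_two_iff_integrable_sq_norm aestronglyMeasurable_id).2 hν.2
    exact h.comp_of_map measurable_snd.aemeasurable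
  exact (m1.sub m2).integrable_sq

/-- On the line, `W₂²` is the squared `L²(0,1)` distance of the quantile functions. -/
lemma W2sq_eq_integral_quantile {μ ν : Measure ℝ} (hμ : IsP2 μ) (hν : IsP2 ν) :
    W2sq μ ν = ∫ u, (quantile μ u - quantile ν u) ^ 2 ∂unitLeb := by
  have := hμ.1
  have := hν.1
  have hm := (aemeasurable_quantile μ).prodMk (aemeasurable_quantile ν)
  have hc := isCoupling_quantileCoupling μ ν
  have hI : ∫ p, ‖p.1 - p.2‖ ^ 2 ∂(quantileCoupling μ ν) =
      ∫ u, (quantile μ u - quantile ν u) ^ 2 ∂unitLeb := by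
    simp only [Real.norm_eq_abs, sq_abs]
    rw [quantileCoupling, integral_map hm (by fun_prop)]
  refine IsLeast.csInf_eq ⟨⟨_, hc, hI.symm⟩, ?_⟩
  rintro c ⟨π, hπ, rfl⟩
  rw [← hI]
  simp only [Real.norm_eq_abs, sq_abs]
  have hπi := integrable_cost hμ hν hπ
  rw [integral_eq_lintegral_of_nonneg_ae (ae_of_all _ fun p => sq_nonneg _) (by fun_prop),
    integral_eq_lintegral_of_nonneg_ae (ae_of_all _ fun p => sq_nonneg _) (by fun_prop)]
  refine ENNReal.toReal_mono ?_ (lintegral_quantileCoupling_le hπ)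
  exact ((hasFiniteIntegral_iff_ofReal (ae_of_all _ fun p => sq_nonneg _)).1 hπi.2).ne

lemma memLp_quantile {μ : Measure ℝ} (hμ : IsP2 μ) : MemLp (quantile μ) 2 unitLeb := by
  have := hμ.1
  have h : MemLp id 2 (unitLeb.map (quantile μ)) := by
    rw [map_quantile μ]
    exact (memLp_two_iff_integrable_sq_norm aestronglyMeasurable_id).2 hμ.2
  exact h.comp_of_map (aemeasurable_quantile μ)

lemma W2_eq_dist {μ ν : Measure ℝ} (hμ : IsP2 μ) (hν : IsP2 ν) :
    W2 μ ν = dist ((memLp_quantile hμ).toLp (quantile μ)) ((memLp_quantile hν).toLp _) := by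
  rw [dist_eq_norm, ← MemLp.toLp_sub, W2, W2sq_eq_integral_quantile hμ hν,
    Real.sqrt_eq_iff_eq_sq (integral_nonneg fun _ => sq_nonneg _) (norm_nonneg _),
    ← real_inner_self_eq_norm_sq, L2.inner_def]
  refine integral_congr_ae ?_
  filter_upwards [((memLp_quantile hμ).sub (memLp_quantile hν)).coeFn_toLp] with u hu
  rw [hu]
  simp [sq]

/-- In the quantile picture, a constant-speed geodesic is a straight segment. -/
lemma IsGeodesic.quantile_eq_lineMap {γ : ℝ → Measure ℝ} (hγ : IsGeodesic 0 1 γ) {s : ℝ}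
    (h0 : IsP2 (γ 0)) (h1 : IsP2 (γ 1)) (hs' : IsP2 (γ s)) (hs : s ∈ Icc (0 : ℝ) 1) :
    (memLp_quantile hs').toLp (quantile (γ s)) =
      AffineMap.lineMap ((memLp_quantile h0).toLp (quantile (γ 0)))
        ((memLp_quantile h1).toLp (quantile (γ 1))) s := by
  have i0 : (0 : ℝ) ∈ Icc (0 : ℝ) 1 := by simp
  have i1 : (1 : ℝ) ∈ Icc (0 : ℝ) 1 := by simp
  apply eq_lineMap_of_dist_eq_mul_of_dist_eq_mul
  · rw [← W2_eq_dist h0 hs', ← W2_eq_dist h0 h1, hγ.2 0 i0 s hs]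
    simp [abs_of_nonneg hs.1]
  · rw [← W2_eq_dist hs' h1, ← W2_eq_dist h0 h1, hγ.2 s hs 1 i1, abs_sub_comm,
      abs_of_nonneg (sub_nonneg.2 hs.2)]
    simp

/-- stability of geodesic interpolation in one dimension. -/
theorem stmt7 (γ γ' : ℝ → Measure ℝ)
    (hγ : IsGeodesic 0 1 γ) (hγ' : IsGeodesic 0 1 γ')
    (s : ℝ) (hs : s ∈ Set.Icc (0 : ℝ) 1) :
    W2 (γ s) (γ' s) ≤ (1 - s) * W2 (γ 0) (γ' 0) + s * W2 (γ 1) (γ' 1) := by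
  have i0 : (0 : ℝ) ∈ Set.Icc (0 : ℝ) 1 := by simp
  have i1 : (1 : ℝ) ∈ Set.Icc (0 : ℝ) 1 := by simp
  have a0 := hγ.1 0 i0
  have a1 := hγ.1 1 i1
  have as := hγ.1 s hs
  have b0 := hγ'.1 0 i0
  have b1 := hγ'.1 1 i1
  have bs := hγ'.1 s hs
  rw [W2_eq_dist as bs, W2_eq_dist a0 b0, W2_eq_dist a1 b1,
    hγ.quantile_eq_lineMap a0 a1 as hs, hγ'.quantile_eq_lineMap b0 b1 bs hs,
    AffineMap.lineMap_apply_module, AffineMap.lineMap_apply_module]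
  refine (dist_add_add_le _ _ _ _).trans (le_of_eq ?_)
  rw [dist_smul₀, dist_smul₀, Real.norm_of_nonneg hs.1, Real.norm_of_nonneg (sub_nonneg.2 hs.2)]

end
end
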